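/- Let λ, μ ∈ ℂ× be nonzero complex numbers. Then the identity φ(x, μz) = λ·φ(λ^{−1}x, z) holds in ℂ((x))[[z]] if and only if p(λx) = μ^{−1}λ·p(x) in ℂ((x)). -/

import Mathlib

/-!
Write `S` for the rescaling `f(x) ↦ f(λ⁻¹x)`. The condition on `p` says `S p = (μ/λ) p`. The
`z¹`-coefficient of the identity for `φ` is `μ p = λ S p`, which is this condition. Conversely, `S` is
multiplicative (`lscale_mul`) and `S ∘ d/dx = λ · d/dx ∘ S` (`lscale_lder`), so the condition
yields `S ∘ D = μ · D ∘ S` for `D = p d/dx`; since `S x = λ⁻¹ x`, induction on `k` gives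
`S (D^k x) = μ^k λ⁻¹ D^k x` (`lscale_iterate_pd`), the coefficient of `z^k` up to `1/k!`.
-/

noncomputable section

open HahnSeries

/-- Formal derivative `d/dx` on `ℂ((x))`. -/
def lder (f : LaurentSeries ℂ) : LaurentSeries ℂ where
  coeff n := ((n + 1 : ℤ) : ℂ) * f.coeff (n + 1)
  isPWO_support' := by
    have hsub : (Function.support fun n : ℤ => ((n + 1 : ℤ) : ℂ) * f.coeff (n + 1)) ⊆
        (fun n : ℤ => n - 1) '' f.support := by
      intro n hn
      refine ⟨n + 1, ?_, by ring⟩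
      have : f.coeff (n + 1) ≠ 0 := by
        intro h
        apply hn
        simp [Function.mem_support, h]
      simpa [HahnSeries.mem_support] using this
    exact (f.isPWO_support.image_of_monotone (fun a b hab => by simpa using hab)).mono hsub

/-- The operator `p(x) d/dx` on `ℂ((x))`. -/
def pd (p : LaurentSeries ℂ) (f : LaurentSeries ℂ) : LaurentSeries ℂ := p * lder f

/-- The divided power `(p(x) d/dx)^{(k)} = (1/k!) (p(x)d/dx)^k`. -/
def pdPow (p : LaurentSeries ℂ) (k : ℕ) (f : LaurentSeries ℂ) : LaurentSeries ℂ :=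
  ((k.factorial : ℂ))⁻¹ • (pd p)^[k] f

/-- The residue of a formal Laurent series: the coefficient of `x⁻¹`. -/
def lres (f : LaurentSeries ℂ) : ℂ := f.coeff (-1)

/-- The variable `x` of `ℂ((x))`. -/
def lx : LaurentSeries ℂ := HahnSeries.single (1 : ℤ) (1 : ℂ)

/-- The rescaling `f(x) ↦ f(μx)` on `ℂ((x))`: `Σ aₙxⁿ ↦ Σ aₙμⁿxⁿ`. -/
def lscale (μ : ℂ) (f : LaurentSeries ℂ) : LaurentSeries ℂ where
  coeff n := μ ^ n * f.coeff n
  isPWO_support' := by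
    apply f.isPWO_support.mono
    intro n hn
    have : f.coeff n ≠ 0 := by
      intro h; apply hn; simp [Function.mem_support, h]
    simpa [HahnSeries.mem_support] using this

theorem lscale_coeff (c : ℂ) (f : LaurentSeries ℂ) (n : ℤ) :
    (lscale c f).coeff n = c ^ n * f.coeff n := rfl

theorem lder_coeff (f : LaurentSeries ℂ) (n : ℤ) :
    (lder f).coeff n = ((n + 1 : ℤ) : ℂ) * f.coeff (n + 1) := rfl

theorem lscale_smul (c a : ℂ) (f : LaurentSeries ℂ) :
    lscale c (a • f) = a • lscale c f := by
  ext n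
  simp only [lscale_coeff, HahnSeries.coeff_smul, smul_eq_mul]
  ring

theorem lder_smul (a : ℂ) (f : LaurentSeries ℂ) : lder (a • f) = a • lder f := by
  ext n
  simp only [lder_coeff, HahnSeries.coeff_smul, smul_eq_mul]
  ring

theorem smul_mul_laurent (a : ℂ) (f g : LaurentSeries ℂ) : (a • f) * g = a • (f * g) := by
  rw [← HahnSeries.C_mul_eq_smul, ← HahnSeries.C_mul_eq_smul, mul_assoc]

theorem mul_smul_laurent (a : ℂ) (f g : LaurentSeries ℂ) : f * (a • g) = a • (f * g) := by
  rw [mul_comm, smul_mul_laurent, mul_comm]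

theorem lder_lx : lder lx = 1 := by
  ext n
  rw [lder_coeff, lx, HahnSeries.coeff_one, HahnSeries.coeff_single]
  by_cases h : n = 0
  · simp [h]
  · simp [h]

theorem lscale_lx (c : ℂ) : lscale c lx = c • lx := by
  ext n
  rw [lscale_coeff, HahnSeries.coeff_smul, lx, HahnSeries.coeff_single]
  by_cases h : n = 1
  · simp [h]
  · simp [h]

theorem lscale_mul {c : ℂ} (hc : c ≠ 0) (f g : LaurentSeries ℂ) :
    lscale c (f * g) = lscale c f * lscale c g := by
  have hs : ∀ h : LaurentSeries ℂ, (lscale c h).support ⊆ h.support := by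
    intro h n hn hz
    exact hn (by simp [lscale_coeff, hz])
  ext n
  -- The sum for the right-hand side is taken over `f.support` in the first index, so only the
  -- second index needs a comparison of supports.
  rw [lscale_coeff, HahnSeries.coeff_mul,
    HahnSeries.coeff_mul_left' f.isPWO_support (hs f)]
  rw [Finset.mul_sum]
  symm
  apply Finset.sum_subset_zero_on_sdiff
  · intro ij hij
    rw [Finset.mem_antidiagonal] at hij ⊢
    exact ⟨hij.1, hs g hij.2.1, hij.2.2⟩
  · intro ij hij
    rw [Finset.mem_sdiff, Finset.mem_antidiagonal, Finset.mem_antidiagonal] at hij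
    have hg : (lscale c g).coeff ij.2 = 0 := by
      by_contra h
      exact hij.2 ⟨hij.1.1, h, hij.1.2.2⟩
    have hg' : g.coeff ij.2 = 0 := by
      rw [lscale_coeff] at hg
      exact (mul_eq_zero.mp hg).resolve_left (zpow_ne_zero _ hc)
    simp [hg']
  · intro ij hij
    rw [Finset.mem_antidiagonal] at hij
    rw [lscale_coeff, lscale_coeff, ← hij.2.2, zpow_add₀ hc]
    ring

theorem lscale_lder {c : ℂ} (hc : c ≠ 0) (f : LaurentSeries ℂ) :
    lscale c (lder f) = c⁻¹ • lder (lscale c f) := by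
  ext n
  simp only [lscale_coeff, lder_coeff, HahnSeries.coeff_smul, smul_eq_mul]
  rw [zpow_add_one₀ hc]
  field_simp

/-- The condition on `p` in terms of the inverse rescaling; the right-hand side is the
`z¹`-coefficient of the identity for `φ`. -/
theorem lscale_eq_iff (p : LaurentSeries ℂ) {lam mu : ℂ} (hlam : lam ≠ 0) (hmu : mu ≠ 0) :
    lscale lam p = (mu⁻¹ * lam) • p ↔ mu • p = lam • lscale lam⁻¹ p := by
  simp only [HahnSeries.ext_iff, funext_iff]
  refine forall_congr' fun n => ?_
  simp only [lscale_coeff, HahnSeries.coeff_smul, smul_eq_mul, inv_zpow]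
  have hn : lam ^ n ≠ 0 := zpow_ne_zero _ hlam
  constructor
  · intro h
    field_simp at h ⊢
    linear_combination h
  · intro h
    field_simp at h ⊢
    linear_combination h

theorem lscale_iterate_pd (p : LaurentSeries ℂ) {lam mu : ℂ} (hlam : lam ≠ 0)
    (h : mu • p = lam • lscale lam⁻¹ p) (k : ℕ) :
    lam • lscale lam⁻¹ ((pd p)^[k] lx) = mu ^ k • (pd p)^[k] lx := by
  induction k with
  | zero => simp [lscale_lx, smul_smul, hlam]
  | succ k ih =>
    rw [Function.iterate_succ_apply']
    set g := (pd p)^[k] lx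
    calc lam • lscale lam⁻¹ (pd p g)
        = (lam • lscale lam⁻¹ p) * lder (lam • lscale lam⁻¹ g) := by
          rw [pd, lscale_mul (inv_ne_zero hlam), lscale_lder (inv_ne_zero hlam), inv_inv,
            lder_smul, smul_mul_laurent]
      _ = mu ^ (k + 1) • pd p g := by
          rw [← h, ih, lder_smul, pd, smul_mul_laurent, mul_smul_laurent, smul_smul, pow_succ']

/-- for nonzero complex numbers `λ, μ`, the identity
`φ(x, μz) = λ·φ(λ⁻¹x, z)` in `ℂ((x))[[z]]` (expressed coefficientwise in `z`,
where the `z^k`-coefficient of `φ(x,z) = Σ_k (z^k/k!) D^k(x)` is `(1/k!)(p d/dx)^k(x)`)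
holds if and only if `p(λx) = μ⁻¹λ·p(x)` in `ℂ((x))`. -/
theorem phi_rescale_iff (p : LaurentSeries ℂ) (hp : p ≠ 0)
    (lam mu : ℂ) (hlam : lam ≠ 0) (hmu : mu ≠ 0) :
    (∀ k : ℕ, mu ^ k • (((k.factorial : ℂ))⁻¹ • (pd p)^[k] lx)
        = lam • lscale lam⁻¹ (((k.factorial : ℂ))⁻¹ • (pd p)^[k] lx))
      ↔ lscale lam p = (mu⁻¹ * lam) • p := by
  rw [lscale_eq_iff p hlam hmu]
  constructor
  · intro h
    simpa [pd, lder_lx] using h 1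
  · intro h k
    rw [lscale_smul, smul_comm lam, lscale_iterate_pd p hlam h k, smul_comm]
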